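/- For every fixed t, the function v ↦ Σ_rz(t,v) is differentiable on [t,∞), satisfies Σ_rz(t,t) = 0, and solves the linear ODE ∂_v Σ_rz(t,v) = ψ_r(t,v)·Σ_rr(t,v) − α(v)·Σ_rz(t,v). -/

import Mathlib

open MeasureTheory Real

/-- Mean reversion factor `φ_r(t,v) = exp(−∫_t^v α)`. -/
noncomputable def phiR (α : ℝ → ℝ) (t v : ℝ) : ℝ := Real.exp (-(∫ u in t..v, α u))

/-- Variance of the short-rate factor `Σ_rr(t,v)`. -/
noncomputable def Srr (α σ : ℝ → ℝ) (t v : ℝ) : ℝ := ∫ u in t..v, (phiR α u v) ^ 2 * (σ u) ^ 2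

/-- Smile dispersion factor `ψ_r(t,v)`. -/
noncomputable def psiR (α σ γ : ℝ → ℝ) (t v : ℝ) : ℝ :=
  Real.exp ((1 / 2) * (γ v) ^ 2 * Srr α σ t v)

/-- Rate–integral covariance `Σ_rz(t,v)`. -/
noncomputable def Srz (α σ γ : ℝ → ℝ) (t v : ℝ) : ℝ :=
  ∫ u in t..v, psiR α σ γ t u * phiR α u v * Srr α σ t u

/-- Variance of the compounding variable `Σ_zz(t,v)`. -/
noncomputable def Szz (α σ γ : ℝ → ℝ) (t v : ℝ) : ℝ :=
  2 * ∫ u in t..v, psiR α σ γ t u * Srz α σ γ t u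

/-- `B*(t,v) = ∫_t^v ψ_r(t,u) φ_r(t,u) du`. -/
noncomputable def Bstar (α σ γ : ℝ → ℝ) (t v : ℝ) : ℝ :=
  ∫ u in t..v, psiR α σ γ t u * phiR α t u

/-- Drift of the compounding variable `μ*(y,t,v)`. -/
noncomputable def muStar (α σ γ : ℝ → ℝ) (y t v : ℝ) : ℝ :=
  Bstar α σ γ t v * (y + Srz α σ γ 0 t) + (1 / 2) * (Bstar α σ γ t v) ^ 2 * Srr α σ 0 t

/-- One-dimensional Gaussian density with mean `m` and variance `s`. -/
noncomputable def gauss (x m s : ℝ) : ℝ :=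
  (Real.sqrt (2 * Real.pi * s))⁻¹ * Real.exp (-(x - m) ^ 2 / (2 * s))

/-- Centered bivariate Gaussian density with covariance `!![srr, srz; srz, szz]` at `(a, b)`. -/
noncomputable def gauss2 (a b srr srz szz : ℝ) : ℝ :=
  (2 * Real.pi * Real.sqrt (srr * szz - srz ^ 2))⁻¹ *
    Real.exp (-(szz * a ^ 2 - 2 * srz * a * b + srr * b ^ 2) / (2 * (srr * szz - srz ^ 2)))

/-- The leading-order (Hull–White) Green's function `G₀`. -/
noncomputable def G0 (α σ γ : ℝ → ℝ) (y z t η ζ v : ℝ) : ℝ :=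
  gauss2 (η - phiR α t v * y) (ζ - z - muStar α σ γ y t v)
    (Srr α σ t v) (Srz α σ γ t v) (Szz α σ γ t v)



lemma phiR_mul (α : ℝ → ℝ) (hα : Continuous α) (t u v : ℝ) :
    phiR α u t * phiR α t v = phiR α u v := by
  rw [phiR, phiR, phiR, ← Real.exp_add, ← neg_add,
    intervalIntegral.integral_add_adjacent_intervals (hα.intervalIntegrable _ _)
      (hα.intervalIntegrable _ _)]

lemma hasDerivAt_phiR (α : ℝ → ℝ) (hα : Continuous α) (t v : ℝ) :
    HasDerivAt (phiR α t) (-α v * phiR α t v) v := by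
  have h := ((hα.integral_hasStrictDerivAt t v).hasDerivAt.neg).exp
  rw [mul_comm]
  exact h

lemma continuous_phiR_right (α : ℝ → ℝ) (hα : Continuous α) (t : ℝ) :
    Continuous (phiR α t) :=
  continuous_iff_continuousAt.2 fun v => (hasDerivAt_phiR α hα t v).continuousAt

lemma continuous_phiR_left (α : ℝ → ℝ) (hα : Continuous α) (t : ℝ) :
    Continuous fun u => phiR α u t := by
  have h : (fun u => phiR α u t) = fun u => (phiR α t u)⁻¹ := by
    funext u
    rw [phiR, phiR, ← Real.exp_neg, intervalIntegral.integral_symm]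
  rw [h]
  exact (continuous_phiR_right α hα t).inv₀ fun u => (Real.exp_pos _).ne'

lemma continuous_Srr (α σ : ℝ → ℝ) (hα : Continuous α) (hσ : Continuous σ) (t : ℝ) :
    Continuous (Srr α σ t) := by
  have h : Srr α σ t =
      fun v => phiR α t v ^ 2 * ∫ u in t..v, phiR α u t ^ 2 * σ u ^ 2 := by
    funext v
    rw [Srr, ← intervalIntegral.integral_const_mul]
    refine intervalIntegral.integral_congr fun u _ => ?_
    simp only [← phiR_mul α hα t u v]
    ring
  rw [h]
  have hc : Continuous fun u => phiR α u t ^ 2 * σ u ^ 2 :=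
    ((continuous_phiR_left α hα t).pow 2).mul (hσ.pow 2)
  exact ((continuous_phiR_right α hα t).pow 2).mul
    (intervalIntegral.continuous_primitive (fun a b => hc.intervalIntegrable a b) t)

lemma continuous_psiR (α σ γ : ℝ → ℝ) (hα : Continuous α) (hσ : Continuous σ)
    (hγ : Continuous γ) (t : ℝ) : Continuous (psiR α σ γ t) :=
  Real.continuous_exp.comp
    ((continuous_const.mul (hγ.pow 2)).mul (continuous_Srr α σ hα hσ t))

lemma Srz_eq_phiR_mul (α σ γ : ℝ → ℝ) (hα : Continuous α) (t v : ℝ) :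
    Srz α σ γ t v =
      phiR α t v * ∫ u in t..v, psiR α σ γ t u * phiR α u t * Srr α σ t u := by
  rw [Srz, ← intervalIntegral.integral_const_mul]
  refine intervalIntegral.integral_congr fun u _ => ?_
  simp only [← phiR_mul α hα t u v]
  ring

theorem Srz_ode (α σ γ : ℝ → ℝ)
    (hα : Continuous α) (hσc : Continuous σ) (hγc : Continuous γ) (t : ℝ) :
    Srz α σ γ t t = 0 ∧
      ∀ v : ℝ, t ≤ v →
        HasDerivAt (fun w => Srz α σ γ t w)
          (psiR α σ γ t v * Srr α σ t v - α v * Srz α σ γ t v) v := by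
  refine ⟨intervalIntegral.integral_same, fun v _ => ?_⟩
  have hc : Continuous fun u => psiR α σ γ t u * phiR α u t * Srr α σ t u :=
    ((continuous_psiR α σ γ hα hσc hγc t).mul (continuous_phiR_left α hα t)).mul
      (continuous_Srr α σ hα hσc t)
  have h := (hasDerivAt_phiR α hα t v).mul (hc.integral_hasStrictDerivAt t v).hasDerivAt
  have hone : phiR α v t * phiR α t v = 1 := by
    rw [phiR_mul α hα, phiR, intervalIntegral.integral_same, neg_zero, Real.exp_zero]
  simp only [Srz_eq_phiR_mul α σ γ hα]
  refine h.congr_deriv ?_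
  linear_combination psiR α σ γ t v * Srr α σ t v * hone
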